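/- arXiv:1512.03732 — 2 statements merged into one kernel-verified Lean document; each statement's English description precedes it below -/
import Mathlib

section
/- If u : ℤ^d → ℂ is harmonic, then for every n ∈ ℕ one has Q_u(2n) ≤ 2·√(Q_u(n)·Q_u(4n)) + 2^{-√n}·Q_u(4n). -/
open Finset

noncomputable section

/-- The generating set of ℤ^d: the `2d` signed standard unit vectors `±e_i`. -/
def Sd (d : ℕ) : Finset (Fin d → ℤ) :=
  (Finset.univ.image fun i => Pi.single i 1) ∪ (Finset.univ.image fun i => Pi.single i (-1))

/-- `Q u n = E |u(S_n)|²` for the simple random walk on ℤ^d started at 0. -/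
noncomputable def Qd (d : ℕ) (u : (Fin d → ℤ) → ℂ) (n : ℕ) : ℝ :=
  ((2 * d : ℝ))⁻¹ ^ n * ∑ s ∈ Fintype.piFinset (fun _ : Fin n => Sd d), ‖u (∑ i, s i)‖ ^ 2

/-- The discrete Laplacian on ℤ^d. -/
noncomputable def lapD (d : ℕ) (u : (Fin d → ℤ) → ℂ) : (Fin d → ℤ) → ℂ :=
  fun x => (2 * d : ℂ)⁻¹ * ∑ s ∈ Sd d, (u (x + s) - u x)

lemma Sd_card (d : ℕ) : (Sd d).card = 2 * d := by
  unfold Sd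
  rw [Finset.card_union_of_disjoint, Finset.card_image_of_injective, Finset.card_image_of_injective]
  · simp; ring
  · intro i j h
    by_contra hne
    have := congrFun h i
    simp [Pi.single_apply, hne] at this
  · intro i j h
    by_contra hne
    have := congrFun h i
    simp [Pi.single_apply, hne] at this
  · rw [Finset.disjoint_left]
    intro a ha hb
    simp only [Finset.mem_image, Finset.mem_univ, true_and] at ha hb
    obtain ⟨i, rfl⟩ := ha
    obtain ⟨j, hj⟩ := hb
    have := congrFun hj i
    simp only [Pi.single_apply] at this
    split_ifs at this <;> simp_all

lemma sum_pi_succ (d n : ℕ) (F : (Fin d → ℤ) → ℝ) :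
    ∑ s ∈ Fintype.piFinset (fun _ : Fin (n + 1) => Sd d), F (∑ i, s i) =
      ∑ s ∈ Fintype.piFinset (fun _ : Fin n => Sd d), ∑ t ∈ Sd d, F (∑ i, s i + t) := by
  rw [← Finset.sum_product']
  refine Finset.sum_nbij' (fun s => (fun i => s i.castSucc, s (Fin.last n)))
    (fun p => Fin.snoc (α := fun _ => Fin d → ℤ) p.1 p.2) ?_ ?_ ?_ ?_ ?_
  · intro s hs
    simp only [Fintype.mem_piFinset, Finset.mem_product] at *
    exact ⟨fun i => hs _, hs _⟩
  · intro p hp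
    simp only [Fintype.mem_piFinset, Finset.mem_product] at *
    intro i
    refine Fin.lastCases ?_ (fun j => ?_) i
    · simpa using hp.2
    · simpa using hp.1 j
  · intro s hs
    exact Fin.snoc_init_self s
  · intro p hp
    ext <;> simp
  · intro s hs
    rw [Fin.sum_univ_castSucc]

lemma harm_sum {d : ℕ} (hd : 1 ≤ d) {u : (Fin d → ℤ) → ℂ} (hu : lapD d u = 0) (x : Fin d → ℤ) :
    ∑ s ∈ Sd d, (u (x + s) - u x) = 0 := by
  have h := congrFun hu x
  simp only [lapD, Pi.zero_apply, mul_eq_zero, inv_eq_zero] at h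
  rcases h with h | h
  · simp at h; omega
  · exact h

lemma harm_diff {d : ℕ} (hd : 1 ≤ d) {u : (Fin d → ℤ) → ℂ} (hu : lapD d u = 0) (t : Fin d → ℤ) :
    lapD d (fun x => u (x + t) - u x) = 0 := by
  funext x
  have h1 := harm_sum hd hu x
  have h2 := harm_sum hd hu (x + t)
  simp only [lapD, Pi.zero_apply]
  have : ∑ s ∈ Sd d, (u (x + s + t) - u (x + s) - (u (x + t) - u x)) =
      ∑ s ∈ Sd d, (u (x + t + s) - u (x + t)) - ∑ s ∈ Sd d, (u (x + s) - u x) := by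
    rw [← Finset.sum_sub_distrib]
    refine Finset.sum_congr rfl fun s _ => ?_
    rw [add_right_comm x s t]; ring
  rw [this, h1, h2]; simp

lemma lap_sq {d : ℕ} (hd : 1 ≤ d) {u : (Fin d → ℤ) → ℂ} (hu : lapD d u = 0) (x : Fin d → ℤ) :
    ∑ t ∈ Sd d, ‖u (x + t)‖ ^ 2 = (2 * d : ℝ) * ‖u x‖ ^ 2 +
      ∑ t ∈ Sd d, ‖u (x + t) - u x‖ ^ 2 := by
  have h := harm_sum hd hu x
  have key : ∀ a b : ℂ, ‖a‖ ^ 2 = ‖b‖ ^ 2 + ‖a - b‖ ^ 2 + 2 * ((starRingEnd ℂ b) * (a - b)).re := by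
    intro a b
    simp only [← Complex.normSq_eq_norm_sq, Complex.normSq_apply, Complex.mul_re, Complex.sub_re,
      Complex.sub_im, Complex.conj_re, Complex.conj_im]
    ring
  rw [Finset.sum_congr rfl fun t _ => key (u (x + t)) (u x)]
  rw [Finset.sum_add_distrib, Finset.sum_add_distrib, ← Finset.mul_sum, ← Complex.re_sum,
    ← Finset.mul_sum, h]
  simp [Sd_card]

lemma Q_diff {d : ℕ} (hd : 1 ≤ d) {u : (Fin d → ℤ) → ℂ} (hu : lapD d u = 0) :
    fwdDiff 1 (Qd d u) = (2 * d : ℝ)⁻¹ • ∑ t ∈ Sd d, Qd d (fun x => u (x + t) - u x) := by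
  funext n
  have hd' : (2 * d : ℝ) ≠ 0 := by positivity
  simp only [fwdDiff, Pi.smul_apply, Finset.sum_apply, smul_eq_mul]
  unfold Qd
  rw [sum_pi_succ d n (fun x => ‖u x‖ ^ 2), Finset.sum_congr rfl fun s _ => lap_sq hd hu _,
    Finset.sum_add_distrib, ← Finset.mul_sum, ← Finset.mul_sum, Finset.sum_comm, pow_succ]
  field_simp
  ring

lemma Q_abs_mono {d : ℕ} (hd : 1 ≤ d) (k : ℕ) : ∀ (u : (Fin d → ℤ) → ℂ), lapD d u = 0 →
    ∀ n, 0 ≤ (fwdDiff 1)^[k] (Qd d u) n := by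
  induction k with
  | zero =>
    intro u _ n
    simp only [Function.iterate_zero, id, Qd]
    positivity
  | succ k ih =>
    intro u hu n
    rw [Function.iterate_succ_apply, Q_diff hd hu, fwdDiff_iter_const_smul,
      fwdDiff_iter_finsetSum]
    simp only [Pi.smul_apply, Finset.sum_apply, smul_eq_mul]
    refine mul_nonneg (by positivity) (Finset.sum_nonneg fun t _ => ?_)
    exact ih _ (harm_diff hd hu t) n

lemma newton (f : ℕ → ℝ) (m N : ℕ) (h : m ≤ N) :
    f m = ∑ k ∈ range (N + 1), (fwdDiff 1)^[k] f 0 * (m.choose k : ℝ) := by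
  have := shift_eq_sum_fwdDiff_iter 1 f m 0
  simp only [smul_eq_mul, mul_one, zero_add, nsmul_eq_mul] at this
  rw [this]
  rw [Finset.sum_congr rfl fun k _ => mul_comm _ _]
  refine Finset.sum_subset (by intro k; simp; omega) ?_
  intro k _ hk
  rw [Nat.choose_eq_zero_of_lt (by simpa using hk)]
  simp

lemma choose_rec (m k : ℕ) :
    (m.choose (k + 1) : ℝ) * (k + 1) = m.choose k * ((m : ℝ) - k) := by
  rcases le_or_gt k m with h | h
  · have := Nat.choose_succ_right_eq m k
    rw [← Nat.cast_sub h]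
    exact_mod_cast this
  · rw [Nat.choose_eq_zero_of_lt h, Nat.choose_eq_zero_of_lt (by omega)]; simp

lemma choose_pow (n k : ℕ) : ((2 * n).choose k : ℝ) * 2 ^ k ≤ (4 * n).choose k := by
  induction k with
  | zero => simp
  | succ k ih =>
    rcases le_or_gt (2 * n) k with h | h
    · rw [Nat.choose_eq_zero_of_lt (show 2 * n < k + 1 by omega)]; simp
    have h1 := choose_rec (2 * n) k
    have h2 := choose_rec (4 * n) k
    push_cast at h1 h2
    have hk : (k : ℝ) < 2 * n := by exact_mod_cast h
    have hk0 : (0 : ℝ) ≤ k := by positivity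
    refine le_of_mul_le_mul_right ?_ (show (0 : ℝ) < k + 1 by positivity)
    calc ((2 * n).choose (k + 1) : ℝ) * 2 ^ (k + 1) * (k + 1)
        = ((2 * n).choose k * 2 ^ k) * (2 * (2 * n - k)) := by rw [pow_succ]; linear_combination 2 ^ k * 2 * h1
      _ ≤ (4 * n).choose k * (4 * n - k) := by
          apply mul_le_mul ih <;> first | linarith | positivity
      _ = _ := h2.symm

lemma choose_sq (n k : ℕ) (hkn : k ≤ n) : ((2 * n).choose k : ℝ) ^ 2 * (2 * n - k ^ 2) ≤
    2 * n * (n.choose k * (4 * n).choose k) := by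
  induction k with
  | zero => simp
  | succ k ih =>
    have ih := ih (by omega)
    have h0 := choose_rec n k
    have h1 := choose_rec (2 * n) k
    have h2 := choose_rec (4 * n) k
    push_cast at h1 h2 ⊢
    have hk : (k : ℝ) + 1 ≤ n := by exact_mod_cast hkn
    have hk0 : (0 : ℝ) ≤ k := by positivity
    refine le_of_mul_le_mul_right ?_ (show (0 : ℝ) < (k + 1) ^ 2 by positivity)
    set B := ((2 * n).choose k : ℝ)
    set A := (n.choose k : ℝ)
    set C := ((4 * n).choose k : ℝ)
    have e1 : ((2 * n).choose (k + 1) : ℝ) ^ 2 * (2 * n - (k + 1) ^ 2) * (k + 1) ^ 2 =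
        B ^ 2 * ((2 * n - k) ^ 2 * (2 * n - (k + 1) ^ 2)) := by
      rw [show ((2 * n).choose (k + 1) : ℝ) ^ 2 * (2 * n - (k + 1) ^ 2) * (k + 1) ^ 2 =
        (((2 * n).choose (k + 1) : ℝ) * (k + 1)) ^ 2 * (2 * n - (k + 1) ^ 2) by ring, h1]; ring
    have e2 : 2 * n * ((n.choose (k + 1) : ℝ) * (4 * n).choose (k + 1)) * (k + 1) ^ 2 =
        2 * n * (A * C) * ((n - k) * (4 * n - k)) := by
      rw [show 2 * n * ((n.choose (k + 1) : ℝ) * (4 * n).choose (k + 1)) * (k + 1) ^ 2 =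
        2 * n * (((n.choose (k + 1) : ℝ) * (k + 1)) * ((4 * n).choose (k + 1) * (k + 1))) by ring,
        h0, h2]; ring
    rw [e1, e2]
    have pos : (0 : ℝ) ≤ (n - k) * (4 * n - k) := mul_nonneg (by linarith) (by linarith)
    refine le_trans ?_ (mul_le_mul_of_nonneg_right ih pos)
    rw [mul_assoc]
    refine mul_le_mul_of_nonneg_left ?_ (by positivity)
    have hA : (n : ℝ) ^ 2 ≤ (2 * n - k) ^ 2 := by
      apply pow_le_pow_left₀ <;> linarith
    have hA' := mul_le_mul_of_nonneg_right hA (show (0 : ℝ) ≤ 2 * k + 1 by positivity)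
    have : (0 : ℝ) ≤ n * k ^ 3 := by positivity
    nlinarith

theorem three_circles_with_error (d : ℕ) (hd : 1 ≤ d)
    (u : (Fin d → ℤ) → ℂ) (hu : lapD d u = 0) (n : ℕ) :
    Qd d u (2 * n) ≤ 2 * Real.sqrt (Qd d u n * Qd d u (4 * n)) +
      (2 : ℝ) ^ (-Real.sqrt n) * Qd d u (4 * n) := by
  have hf := fun k => Q_abs_mono hd k u hu 0
  have e1 := newton (Qd d u) n (4 * n) (by omega)
  have e2 := newton (Qd d u) (2 * n) (4 * n) (by omega)
  have e4 := newton (Qd d u) (4 * n) (4 * n) le_rfl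
  set a : ℕ → ℝ := fun k => (fwdDiff 1)^[k] (Qd d u) 0 with ha
  have hf : ∀ k, 0 ≤ a k := hf
  rw [e1, e2, e4]
  have term : ∀ k, a k * ((2 * n).choose k : ℝ) ≤
      2 * (Real.sqrt (a k * (n.choose k : ℝ)) * Real.sqrt (a k * ((4 * n).choose k : ℝ))) +
        (2 : ℝ) ^ (-Real.sqrt n) * (a k * ((4 * n).choose k : ℝ)) := by
    intro k
    have hak := hf k
    rcases le_or_gt (k ^ 2) n with h | h
    · have hkn : k ≤ n := le_trans (Nat.le_self_pow (by norm_num) k) h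
      have hs := choose_sq n k hkn
      have h' : (k : ℝ) ^ 2 ≤ n := by exact_mod_cast h
      have hmain : ((2 * n).choose k : ℝ) ^ 2 ≤ 4 * (n.choose k * (4 * n).choose k) := by
        rcases Nat.eq_zero_or_pos n with h0 | h0
        · subst h0
          obtain rfl : k = 0 := by omega
          norm_num
        · have h0' : (0 : ℝ) < n := by exact_mod_cast h0
          refine le_of_mul_le_mul_right ?_ h0'
          have : ((2 * n).choose k : ℝ) ^ 2 * n ≤ ((2 * n).choose k : ℝ) ^ 2 * (2 * n - k ^ 2) :=
            mul_le_mul_of_nonneg_left (by linarith) (by positivity)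
          have : (0 : ℝ) ≤ n * (n.choose k * (4 * n).choose k) := by positivity
          linarith
      have : a k * ((2 * n).choose k : ℝ) ≤
          2 * (Real.sqrt (a k * (n.choose k : ℝ)) * Real.sqrt (a k * ((4 * n).choose k : ℝ))) := by
        rw [← Real.sqrt_mul (by positivity)]
        refine (le_abs_self _).trans (abs_le_of_sq_le_sq ?_ (by positivity))
        rw [mul_pow 2, Real.sq_sqrt (by positivity)]
        have := mul_le_mul_of_nonneg_left hmain (sq_nonneg (a k))
        linarith
      have : (0 : ℝ) ≤ (2 : ℝ) ^ (-Real.sqrt n) * (a k * ((4 * n).choose k : ℝ)) := by positivity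
      linarith
    · have hp := choose_pow n k
      have h' : Real.sqrt n ≤ k := by
        rw [Real.sqrt_le_left (by positivity)]
        exact_mod_cast h.le
      have h2 : (2 : ℝ) ^ (-(k : ℝ)) ≤ (2 : ℝ) ^ (-Real.sqrt n) :=
        Real.rpow_le_rpow_of_exponent_le (by norm_num) (by linarith)
      have h3 : ((2 * n).choose k : ℝ) ≤ (2 : ℝ) ^ (-(k : ℝ)) * (4 * n).choose k := by
        rw [Real.rpow_neg (by norm_num), Real.rpow_natCast, inv_mul_eq_div,
          le_div_iff₀ (by positivity)]
        exact hp
      have h4 : ((2 * n).choose k : ℝ) ≤ (2 : ℝ) ^ (-Real.sqrt n) * (4 * n).choose k :=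
        h3.trans (mul_le_mul_of_nonneg_right h2 (by positivity))
      have h5 := mul_le_mul_of_nonneg_left h4 hak
      have : (0 : ℝ) ≤ 2 * (Real.sqrt (a k * (n.choose k : ℝ)) *
        Real.sqrt (a k * ((4 * n).choose k : ℝ))) := by positivity
      linarith
  refine (Finset.sum_le_sum fun k _ => term k).trans ?_
  rw [Finset.sum_add_distrib, ← Finset.mul_sum, ← Finset.mul_sum]
  gcongr
  rw [Real.sqrt_mul (Finset.sum_nonneg fun k _ => mul_nonneg (hf k) (by positivity))]
  exact Real.sum_sqrt_mul_sqrt_le _ (fun k => mul_nonneg (hf k) (by positivity))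
    (fun k => mul_nonneg (hf k) (by positivity))
end
end

section
/- For every k ∈ ℕ and every j with 0 ≤ j ≤ k, the Newton coefficient satisfies a_{k,j} = 4^{-j}·Q̃_j(k−j). In particular a_{k,0} = 1. -/
open Finset

noncomputable section

/-- The generating set `S = {(1,0),(-1,0),(0,1),(0,-1)}` of ℤ². -/
def Sfin : Finset (ℤ × ℤ) := {(1,0), (-1,0), (0,1), (0,-1)}

/-- `Q u n = E |u(S_n)|²` for the simple random walk on ℤ² started at 0. -/
noncomputable def Q (u : ℤ × ℤ → ℂ) (n : ℕ) : ℝ :=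
  (4 : ℝ)⁻¹ ^ n * ∑ s ∈ Fintype.piFinset (fun _ : Fin n => Sfin), ‖u (∑ i, s i)‖ ^ 2

/-- Generalized binomial coefficient `binom(x,k) = (1/k!)·∏_{j<k}(x-j)`. -/
noncomputable def gbinom (x : ℝ) (k : ℕ) : ℝ :=
  (∏ j ∈ Finset.range k, (x - j)) / (Nat.factorial k)

/-- `F_k(x) = binom(x + (k-1)/2, k)`, a discretization of `x^k/k!`. -/
noncomputable def F (k : ℕ) (x : ℝ) : ℝ := gbinom (x + ((k : ℝ) - 1) / 2) k

/-- `Z_k(x,y) = Σ_{l=0}^k i^l F_{k-l}(x) F_l(y)`, a harmonic discretization of `z^k/k!`. -/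
noncomputable def Z (k : ℕ) (x y : ℝ) : ℂ :=
  ∑ l ∈ Finset.range (k + 1), Complex.I ^ l * (F (k - l) x : ℂ) * (F l y : ℂ)

/-- `Z̃_k(x,y) = 2^k Z_k(x/2, y/2)`. -/
noncomputable def Ztilde (k : ℕ) (x y : ℝ) : ℂ := 2 ^ k * Z k (x / 2) (y / 2)

/-- `Q_k := Q_{Z_k}` (with `Z_k` restricted to ℤ²). -/
noncomputable def Qk (k : ℕ) (n : ℕ) : ℝ := Q (fun p => Z k p.1 p.2) n

/-- `Q̃_k := Q_{Z̃_k}` (with `Z̃_k` restricted to ℤ²). -/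
noncomputable def Qtilde (k : ℕ) (n : ℕ) : ℝ := Q (fun p => Ztilde k p.1 p.2) n

/-- Forward difference operator: `fwd f n = f (n+1) - f n`. -/
def fwd (f : ℕ → ℝ) : ℕ → ℝ := fun n => f (n + 1) - f n

/-- Newton coefficients `a_{k,j} = Q_k^{(k-j)}(0)`. -/
noncomputable def a (k j : ℕ) : ℝ := fwd^[k - j] (Qk k) 0


lemma gbinom_pascal (x : ℝ) (k : ℕ) :
    gbinom (x + 1) (k + 1) - gbinom x (k + 1) = gbinom x k := by
  unfold gbinom
  rw [Finset.prod_range_succ', Finset.prod_range_succ (fun j : ℕ => x - (j : ℝ)), Nat.factorial_succ]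
  have h : ∀ j : ℕ, x + 1 - ((j + 1 : ℕ) : ℝ) = x - j := by intro j; push_cast; ring
  simp only [h]
  have h1 : ((k : ℝ) + 1) ≠ 0 := by positivity
  have h2 : ((Nat.factorial k : ℕ) : ℝ) ≠ 0 := by positivity
  push_cast
  field_simp
  ring

lemma F_diff (k : ℕ) (x : ℝ) : F (k + 1) (x + 1 / 2) - F (k + 1) (x - 1 / 2) = F k x := by
  unfold F
  rw [← gbinom_pascal (x + ((k : ℝ) - 1) / 2) k]
  push_cast
  congr 2 <;> ring

lemma F_zero (x : ℝ) : F 0 x = 1 := by simp [F, gbinom]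

lemma Z_zero (x y : ℝ) : Z 0 x y = 1 := by simp [Z, F_zero]

lemma Z_diff_x (k : ℕ) (x y : ℝ) :
    Z (k + 1) (x + 1 / 2) y - Z (k + 1) (x - 1 / 2) y = Z k x y := by
  unfold Z
  rw [Finset.sum_range_succ, Finset.sum_range_succ (n := k + 1)]
  simp only [Nat.sub_self, F_zero, add_sub_add_right_eq_sub]
  rw [← Finset.sum_sub_distrib]
  refine Finset.sum_congr rfl fun l hl => ?_
  have hl : k + 1 - l = (k - l) + 1 := by
    have := Finset.mem_range.1 hl
    omega
  rw [hl, ← F_diff (k - l) x]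
  push_cast
  ring

lemma Z_diff_y (k : ℕ) (x y : ℝ) :
    Z (k + 1) x (y + 1 / 2) - Z (k + 1) x (y - 1 / 2) = Complex.I * Z k x y := by
  unfold Z
  rw [Finset.sum_range_succ', Finset.sum_range_succ' (n := k + 1)]
  simp only [F_zero, add_sub_add_right_eq_sub]
  rw [← Finset.sum_sub_distrib, Finset.mul_sum]
  refine Finset.sum_congr rfl fun l hl => ?_
  rw [← F_diff l y, Nat.add_sub_add_right]
  push_cast
  ring

lemma Z_harm (k : ℕ) (x y : ℝ) :
    Z k (x + 1 / 2) y - Z k (x - 1 / 2) y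
      + Complex.I * (Z k x (y + 1 / 2) - Z k x (y - 1 / 2)) = 0 := by
  cases k with
  | zero => simp [Z_zero]
  | succ k =>
    rw [Z_diff_x, Z_diff_y]
    linear_combination Z k x y * Complex.I_mul_I

lemma sq_alg (u A B C D : ℂ) (h : A - B + Complex.I * (C - D) = 0) :
    ‖u + A‖ ^ 2 + ‖u - B‖ ^ 2 + ‖u + Complex.I * C‖ ^ 2 + ‖u - Complex.I * D‖ ^ 2
      = 4 * ‖u‖ ^ 2 + (‖A‖ ^ 2 + ‖B‖ ^ 2 + ‖C‖ ^ 2 + ‖D‖ ^ 2) := by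
  have h1 := congrArg Complex.re h
  have h2 := congrArg Complex.im h
  simp at h1 h2
  simp only [← Complex.normSq_eq_norm_sq, Complex.normSq_apply]
  simp
  linear_combination 2 * u.re * h1 + 2 * u.im * h2

lemma Z_sq (k : ℕ) (x y : ℝ) :
    ‖Z (k + 1) (x + 1) y‖ ^ 2 + ‖Z (k + 1) (x - 1) y‖ ^ 2
      + ‖Z (k + 1) x (y + 1)‖ ^ 2 + ‖Z (k + 1) x (y - 1)‖ ^ 2
    = 4 * ‖Z (k + 1) x y‖ ^ 2 + (‖Z k (x + 1 / 2) y‖ ^ 2 + ‖Z k (x - 1 / 2) y‖ ^ 2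
      + ‖Z k x (y + 1 / 2)‖ ^ 2 + ‖Z k x (y - 1 / 2)‖ ^ 2) := by
  have e1 : ∀ t : ℝ, t + 1 / 2 + 1 / 2 = t + 1 := by intro t; ring
  have e2 : ∀ t : ℝ, t + 1 / 2 - 1 / 2 = t := by intro t; ring
  have e3 : ∀ t : ℝ, t - 1 / 2 + 1 / 2 = t := by intro t; ring
  have e4 : ∀ t : ℝ, t - 1 / 2 - 1 / 2 = t - 1 := by intro t; ring
  have h1 := Z_diff_x k (x + 1 / 2) y
  have h2 := Z_diff_x k (x - 1 / 2) y
  have h3 := Z_diff_y k x (y + 1 / 2)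
  have h4 := Z_diff_y k x (y - 1 / 2)
  rw [e1, e2] at h1 h3
  rw [e3, e4] at h2 h4
  rw [← sq_alg _ _ _ _ _ (Z_harm k x y), ← h1, ← h2, ← h3, ← h4]
  simp only [add_sub_cancel, sub_sub_cancel]

lemma sum_Sfin (f : ℤ × ℤ → ℝ) :
    ∑ s ∈ Sfin, f s = f (1, 0) + f (-1, 0) + f (0, 1) + f (0, -1) := by
  unfold Sfin
  rw [Finset.sum_insert (by decide), Finset.sum_insert (by decide),
    Finset.sum_insert (by decide), Finset.sum_singleton]
  ring

lemma Q_succ (u : ℤ × ℤ → ℂ) (n : ℕ) :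
    Q u (n + 1) = 1 / 4 * ∑ t ∈ Sfin, Q (fun q => u (t + q)) n := by
  unfold Q
  rw [← Finset.mul_sum, ← mul_assoc, pow_succ']
  congr 1
  · ring
  rw [← Finset.sum_product']
  refine Finset.sum_bij' (fun s _ => (s 0, Fin.tail s)) (fun p _ => Fin.cons p.1 p.2) ?_ ?_ ?_ ?_ ?_
  · intro s hs
    simp only [Fintype.mem_piFinset] at hs
    simp only [Finset.mem_product, Fintype.mem_piFinset]
    exact ⟨hs 0, fun i => hs i.succ⟩
  · intro p hp
    simp only [Finset.mem_product, Fintype.mem_piFinset] at hp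
    simp only [Fintype.mem_piFinset]
    intro i
    refine Fin.cases ?_ (fun i => ?_) i
    · simpa using hp.1
    · simpa using hp.2 i
  · intro s _
    simp
  · intro p _
    simp
  · intro s _
    simp [Fin.sum_univ_succ, Fin.tail]

lemma fwd_Q (k : ℕ) (c d : ℝ) :
    fwd (Q (fun q => Z (k + 1) (c + q.1) (d + q.2))) = fun n => 1 / 4 *
      (Q (fun q => Z k (c + 1 / 2 + q.1) (d + q.2)) n
      + Q (fun q => Z k (c - 1 / 2 + q.1) (d + q.2)) n
      + Q (fun q => Z k (c + q.1) (d + 1 / 2 + q.2)) n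
      + Q (fun q => Z k (c + q.1) (d - 1 / 2 + q.2)) n) := by
  funext n
  unfold fwd
  rw [Q_succ, sum_Sfin]
  unfold Q
  simp only [← mul_add, ← Finset.sum_add_distrib]
  have key : ∀ q : ℤ × ℤ,
      ‖Z (k + 1) (c + (((1, 0) + q : ℤ × ℤ).1 : ℤ)) (d + (((1, 0) + q : ℤ × ℤ).2 : ℤ))‖ ^ 2
      + ‖Z (k + 1) (c + (((-1, 0) + q : ℤ × ℤ).1 : ℤ)) (d + (((-1, 0) + q : ℤ × ℤ).2 : ℤ))‖ ^ 2
      + ‖Z (k + 1) (c + (((0, 1) + q : ℤ × ℤ).1 : ℤ)) (d + (((0, 1) + q : ℤ × ℤ).2 : ℤ))‖ ^ 2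
      + ‖Z (k + 1) (c + (((0, -1) + q : ℤ × ℤ).1 : ℤ)) (d + (((0, -1) + q : ℤ × ℤ).2 : ℤ))‖ ^ 2
      = 4 * ‖Z (k + 1) (c + q.1) (d + q.2)‖ ^ 2 + (‖Z k (c + 1 / 2 + q.1) (d + q.2)‖ ^ 2
        + ‖Z k (c - 1 / 2 + q.1) (d + q.2)‖ ^ 2 + ‖Z k (c + q.1) (d + 1 / 2 + q.2)‖ ^ 2
        + ‖Z k (c + q.1) (d - 1 / 2 + q.2)‖ ^ 2) := by
    intro q
    have h := Z_sq k (c + q.1) (d + q.2)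
    simp only [Prod.fst_add, Prod.snd_add]
    push_cast
    convert h using 1
    · simp only [zero_add]
      congr 1
      · congr 1
        · congr 1
          · congr 3; ring
          · congr 3; ring
        · congr 3; ring
      · congr 3; ring
    · congr 1
      congr 1
      · congr 1
        · congr 1
          · congr 3; ring
          · congr 3; ring
        · congr 3; ring
      · congr 3; ring
  simp only [key]
  rw [Finset.sum_add_distrib, ← Finset.mul_sum]
  ring

lemma fwd_iter_lin (m : ℕ) : ∀ (f g h l : ℕ → ℝ) (x : ℕ),
    fwd^[m] (fun n => 1 / 4 * (f n + g n + h n + l n)) x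
      = 1 / 4 * (fwd^[m] f x + fwd^[m] g x + fwd^[m] h x + fwd^[m] l x) := by
  induction m with
  | zero => intros; rfl
  | succ m ih =>
    intro f g h l x
    simp only [Function.iterate_succ, Function.comp]
    rw [← ih]
    have e : (fwd fun n => 1 / 4 * (f n + g n + h n + l n))
        = fun n => 1 / 4 * (fwd f n + fwd g n + fwd h n + fwd l n) := by
      funext n
      simp only [fwd]
      ring
    rw [e]

lemma main_iter (k m : ℕ) : ∀ c d : ℝ,
    fwd^[m] (Q (fun q => Z (k + m) (c + q.1) (d + q.2))) 0
      = Q (fun q => Z k (c + q.1 / 2) (d + q.2 / 2)) m := by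
  induction m with
  | zero => intro c d; simp [Q]
  | succ m ih =>
    intro c d
    rw [Function.iterate_succ_apply, ← add_assoc, fwd_Q, fwd_iter_lin, ih, ih, ih, ih, Q_succ,
      sum_Sfin]
    simp only [Prod.fst_add, Prod.snd_add]
    push_cast
    simp only [zero_add, add_div, neg_div, sub_eq_add_neg, add_assoc]

lemma Qtilde_eq (j m : ℕ) :
    (4 : ℝ)⁻¹ ^ j * Qtilde j m = Q (fun q => Z j (0 + q.1 / 2) (0 + q.2 / 2)) m := by
  unfold Qtilde Q Ztilde
  rw [mul_left_comm, Finset.mul_sum]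
  congr 1
  refine Finset.sum_congr rfl fun s _ => ?_
  rw [norm_mul, mul_pow, norm_pow, ← mul_assoc]
  simp only [zero_add, Complex.norm_ofNat]
  rw [← pow_mul, mul_comm j 2, pow_mul, ← mul_pow]
  norm_num

theorem Qk_recursive :
    (∀ k j : ℕ, j ≤ k → a k j = (4 : ℝ)⁻¹ ^ j * Qtilde j (k - j)) ∧
    (∀ k : ℕ, a k 0 = 1) := by
  have main : ∀ k j : ℕ, j ≤ k → a k j = (4 : ℝ)⁻¹ ^ j * Qtilde j (k - j) := by
    intro k j hj
    rw [Qtilde_eq, ← main_iter, Nat.add_sub_cancel' hj]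
    simp only [zero_add]
    rfl
  refine ⟨main, fun k => ?_⟩
  rw [main k 0 (Nat.zero_le k)]
  have hc : Sfin.card = 4 := by decide
  simp [Qtilde, Q, Ztilde, Z_zero, Fintype.card_piFinset, hc]
end
end
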